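/- Let (Q, Σ) be a DFA and let c be a natural number. Suppose there exists a word u over Σ such that |Qu| ≤ |Q| − c. Then for every subset R ⊆ Q with |R| ≤ |Q| − c + 1 there exists a word w over Σ with |w| ≤ c(c+1)/2 and |Rw| ≤ |Q| − c. -/

import Mathlib

/-- The image of a finite set of states `R` under a word (list of letters),
where each letter `s` acts on states via `act s`. -/
def wordImage {Q A : Type*} [DecidableEq Q] (act : A → Q → Q) (R : Finset Q) :
    List A → Finset Q
  | [] => R
  | s :: w => wordImage act (R.image (act s)) w


open Finset in
lemma prod_mem_span {Q ι : Type*} [DecidableEq Q] (e : Q → ℚ) (s t : ι → ℚ) (S : Finset Q) :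
    (fun i => ∏ r ∈ S, (e r ^ 2 - e r * s i + t i)) ∈
      Submodule.span ℚ {f : ι → ℚ | ∃ a b : ℕ, a + b ≤ S.card ∧ f = fun i => s i ^ a * t i ^ b} := by
  induction S using Finset.induction_on with
  | empty =>
    apply Submodule.subset_span
    exact ⟨0, 0, by simp, by simp⟩
  | insert x S hx ih =>
    rw [Finset.card_insert_of_notMem hx]
    have key : ∀ f ∈ Submodule.span ℚ
        {f : ι → ℚ | ∃ a b : ℕ, a + b ≤ S.card ∧ f = fun i => s i ^ a * t i ^ b},
        (fun i => (e x ^ 2 - e x * s i + t i) * f i) ∈ Submodule.span ℚ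
        {f : ι → ℚ | ∃ a b : ℕ, a + b ≤ S.card + 1 ∧ f = fun i => s i ^ a * t i ^ b} := by
      intro f hf
      induction hf using Submodule.span_induction with
      | mem f hf =>
        obtain ⟨a, b, hab, rfl⟩ := hf
        have h1 : (fun i => s i ^ a * t i ^ b) ∈ Submodule.span ℚ
          {f : ι → ℚ | ∃ a b : ℕ, a + b ≤ S.card + 1 ∧ f = fun i => s i ^ a * t i ^ b} :=
          Submodule.subset_span ⟨a, b, by omega, rfl⟩
        have h2 : (fun i => s i ^ (a+1) * t i ^ b) ∈ Submodule.span ℚ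
          {f : ι → ℚ | ∃ a b : ℕ, a + b ≤ S.card + 1 ∧ f = fun i => s i ^ a * t i ^ b} :=
          Submodule.subset_span ⟨a+1, b, by omega, rfl⟩
        have h3 : (fun i => s i ^ a * t i ^ (b+1)) ∈ Submodule.span ℚ
          {f : ι → ℚ | ∃ a b : ℕ, a + b ≤ S.card + 1 ∧ f = fun i => s i ^ a * t i ^ b} :=
          Submodule.subset_span ⟨a, b+1, by omega, rfl⟩
        convert Submodule.add_mem _ (Submodule.sub_mem _ (Submodule.smul_mem _ (e x ^ 2) h1)
          (Submodule.smul_mem _ (e x) h2)) h3 using 1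
        ext i
        simp only [Pi.add_apply, Pi.sub_apply, Pi.smul_apply, smul_eq_mul]
        ring
      | zero =>
        convert Submodule.zero_mem _ using 1
        ext i; simp
      | add f g _ _ hf hg =>
        convert Submodule.add_mem _ hf hg using 1
        ext i; simp [mul_add]
      | smul k f _ hf =>
        convert Submodule.smul_mem _ k hf using 1
        ext i; simp; ring
    convert key _ ih using 1
    ext i
    rw [Finset.prod_insert hx]

lemma card_bound {m d : ℕ} (s t : Fin m → ℚ) (F : Fin m → Fin m → ℚ)
    (hF : LinearIndependent ℚ F)
    (hs : ∀ j, F j ∈ Submodule.span ℚ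
      {f : Fin m → ℚ | ∃ a b : ℕ, a + b ≤ d ∧ f = fun i => s i ^ a * t i ^ b}) :
    m ≤ (d + 1) * (d + 2) / 2 := by
  classical
  let P : Finset (ℕ × ℕ) := (Finset.range (d + 1)).biUnion (fun k => Finset.HasAntidiagonal.antidiagonal k)
  let T : Finset (Fin m → ℚ) := P.image (fun p => fun i => s i ^ p.1 * t i ^ p.2)
  have hT : {f : Fin m → ℚ | ∃ a b : ℕ, a + b ≤ d ∧ f = fun i => s i ^ a * t i ^ b} ⊆ T := by
    rintro f ⟨a, b, hab, rfl⟩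
    simp only [T, P, Finset.coe_image, Set.mem_image, Finset.mem_coe, Finset.mem_biUnion,
      Finset.mem_range, Finset.HasAntidiagonal.mem_antidiagonal]
    exact ⟨(a, b), ⟨a + b, by omega, rfl⟩, rfl⟩
  have hP : P.card ≤ (d + 1) * (d + 2) / 2 := by
    refine Finset.card_biUnion_le.trans ?_
    simp only [Finset.Nat.card_antidiagonal]
    have h1 : ∀ n : ℕ, (∑ u ∈ Finset.range n, (u + 1)) * 2 = n * (n + 1) := by
      intro n
      induction n with
      | zero => simp
      | succ n ih => rw [Finset.sum_range_succ, add_mul, ih]; ring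
    have := h1 (d + 1)
    rw [show d + 1 + 1 = d + 2 from rfl] at this
    omega
  have h2 : T.card ≤ P.card := Finset.card_image_le
  have h3 : Set.range F ≤ Submodule.span ℚ (T : Set (Fin m → ℚ)) := by
    rintro _ ⟨j, rfl⟩
    exact Submodule.span_mono hT (hs j)
  have h4 := linearIndependent_le_span_aux' F hF (T : Set (Fin m → ℚ)) h3
  simp at h4
  omega

/-- Skew Bollobas for pairs. -/
lemma skew {Q : Type*} [Fintype Q] [DecidableEq Q] {m d : ℕ} (p q : Fin m → Q)
    (B : Fin m → Finset Q) (hB : ∀ i, (B i).card ≤ d)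
    (h1 : ∀ i, p i ∉ B i ∧ q i ∉ B i)
    (h2 : ∀ i j, j < i → p i ∈ B j ∨ q i ∈ B j) : m ≤ (d + 1) * (d + 2) / 2 := by
  let e : Q → ℚ := fun x => ((Fintype.equivFin Q x : ℕ) : ℚ)
  have he : ∀ x y, e x = e y → x = y := by
    intro x y h
    simpa [e, Fin.val_inj] using h
  let s : Fin m → ℚ := fun i => e (p i) + e (q i)
  let t : Fin m → ℚ := fun i => e (p i) * e (q i)
  let F : Matrix (Fin m) (Fin m) ℚ := fun j i => ∏ r ∈ B j, (e r ^ 2 - e r * s i + t i)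
  have hfac : ∀ r i, e r ^ 2 - e r * s i + t i = (e r - e (p i)) * (e r - e (q i)) := by
    intro r i; simp only [s, t]; ring
  have hz : ∀ i j, j < i → F j i = 0 := by
    intro i j hij
    rcases h2 i j hij with h | h
    · exact Finset.prod_eq_zero h (by rw [hfac]; simp)
    · exact Finset.prod_eq_zero h (by rw [hfac]; simp)
  have hd : ∀ i, F i i ≠ 0 := by
    intro i
    refine Finset.prod_ne_zero_iff.2 ?_
    intro r hr
    rw [hfac]
    refine mul_ne_zero (sub_ne_zero.2 fun h => ?_) (sub_ne_zero.2 fun h => ?_)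
    · exact (h1 i).1 (he _ _ h ▸ hr)
    · exact (h1 i).2 (he _ _ h ▸ hr)
  have hdet : F.det ≠ 0 := by
    rw [Matrix.det_of_lowerTriangular F (fun j i hij => hz i j hij)]
    exact Finset.prod_ne_zero_iff.2 fun i _ => hd i
  have hli : LinearIndependent ℚ (fun j => F j) :=
    Matrix.linearIndependent_rows_of_det_ne_zero hdet
  refine card_bound s t (fun j => F j) hli ?_
  intro j
  refine Submodule.span_mono ?_ (prod_mem_span e s t (B j))
  rintro f ⟨a, b, hab, rfl⟩
  exact ⟨a, b, hab.trans (hB j), rfl⟩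

def runW {Q A : Type*} (act : A → Q → Q) : List A → Q → Q
  | [], q => q
  | s :: w, q => runW act w (act s q)

lemma runW_append {Q A : Type*} (act : A → Q → Q) (a b : List A) (q : Q) :
    runW act (a ++ b) q = runW act b (runW act a q) := by
  induction a generalizing q with
  | nil => rfl
  | cons x a ih => exact ih _

lemma wordImage_eq {Q A : Type*} [DecidableEq Q] (act : A → Q → Q) (R : Finset Q) (w : List A) :
    wordImage act R w = R.image (runW act w) := by
  induction w generalizing R with
  | nil => ext; simp [wordImage, runW]
  | cons x w ih =>
    rw [wordImage, ih, Finset.image_image]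
    rfl

theorem stmt_3 {Q A : Type*} [Fintype Q] [DecidableEq Q] (act : A → Q → Q)
    (c : ℕ)
    (h : ∃ u : List A, (wordImage act Finset.univ u).card ≤ Fintype.card Q - c)
    (R : Finset Q) (hR : R.card ≤ Fintype.card Q - c + 1) :
    ∃ w : List A, w.length ≤ c * (c + 1) / 2 ∧
      (wordImage act R w).card ≤ Fintype.card Q - c := by
  by_cases hsm : R.card ≤ Fintype.card Q - c
  · exact ⟨[], by simp, hsm⟩
  obtain ⟨u, hu⟩ := h
  have hRn : R.card ≤ Fintype.card Q := Finset.card_le_univ R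
  have hRne : R.Nonempty := Finset.card_pos.1 (by omega)
  rw [wordImage_eq] at hu
  have huR : (R.image (runW act u)).card ≤ Fintype.card Q - c :=
    (Finset.card_le_card (Finset.image_subset_image (Finset.subset_univ R))).trans hu
  have hpos : 0 < (R.image (runW act u)).card := Finset.card_pos.2 (hRne.image _)
  have hex : ∃ n, ∃ w : List A, w.length = n ∧ ¬ Set.InjOn (runW act w) R := by
    refine ⟨_, u, rfl, fun hinj => ?_⟩
    rw [Finset.card_image_of_injOn hinj] at huR
    omega
  classical
  obtain ⟨w, hwl, hw⟩ := Nat.find_spec hex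
  have hmin : ∀ v : List A, v.length < w.length → Set.InjOn (runW act v) R := by
    intro v hv
    by_contra hc
    rw [hwl] at hv
    exact Nat.find_min hex hv ⟨v, rfl, hc⟩
  refine ⟨w, ?_, ?_⟩
  swap
  · rw [wordImage_eq]
    have h1 : (R.image (runW act w)).card ≤ R.card := Finset.card_image_le
    have h2 : (R.image (runW act w)).card ≠ R.card := fun h => hw (Finset.card_image_iff.1 h)
    omega
  simp only [Set.InjOn, not_forall] at hw
  obtain ⟨p, hp, q, hq, hpq, hne⟩ := hw
  have hsk := skew (m := w.length) (d := c - 1)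
    (fun i => runW act (w.take i) p) (fun i => runW act (w.take i) q)
    (fun i => (R.image (runW act (w.take i)))ᶜ) ?_ ?_ ?_
  · obtain ⟨k, rfl⟩ : ∃ k, c = k + 1 := ⟨c - 1, by omega⟩
    simpa using hsk
  · intro i
    have hi := i.2
    rw [Finset.card_compl, Finset.card_image_of_injOn (hmin _ (by simp))]
    omega
  · intro i
    simp only [Finset.mem_compl, not_not]
    exact ⟨Finset.mem_image_of_mem _ hp, Finset.mem_image_of_mem _ hq⟩
  · intro i j hij
    by_contra hcon
    simp only [Finset.mem_compl, not_or, not_not, Finset.mem_image] at hcon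
    obtain ⟨⟨p', hp', hpe⟩, ⟨q', hq', hqe⟩⟩ := hcon
    have hi := i.2
    have hij' : (j : ℕ) < i := hij
    have hinj := hmin (w.take j ++ w.drop i) (by simp; omega)
    have hsplit : ∀ x, runW act (w.drop i) (runW act (w.take i) x) = runW act w x := by
      intro x; rw [← runW_append, List.take_append_drop]
    have heq : p' = q' := by
      apply hinj hp' hq'
      rw [runW_append, runW_append, hpe, hqe, hsplit, hsplit, hpq]
    subst heq
    exact hne (hmin (w.take i) (by simp) hp hq (hpe.symm.trans hqe))
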